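/- Let V be a finite set and g : 2^V → ℝ normalized, monotone and submodular with curvature bound k_f ∈ [0,1] (g(V) − g(V \ {v}) ≥ (1 − k_f)·g({v}) for every v ∈ V). Then for all X, Q ⊆ V, writing Δ = X ∩ Q, g(X ∪ (Q \ Δ)) − g(X) ≥ (1 − k_f) · ( g(Q) − g(Δ) ). -/

import Mathlib

/-! Put `S = Q \ X`, which is disjoint from `X` and from `X ∩ Q`. Adding the elements of `S` one by
one to either set produces a telescoping sum of marginal gains. By diminishing returns each gain
over `X` is at least the gain from adding that element last of all, and each gain over `X ∩ Q` is
at most the value of the element alone; the curvature bound compares these two extremes termwise.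
-/

/-- Submodularity of a function on a lattice; on `Finset V`, where `⊔` is `∪` and `⊓` is `∩`, this
is the usual notion for set functions. -/
def IsSubmodular {α R : Type*} [Lattice α] [Add R] [LE R] (f : α → R) : Prop :=
  ∀ a b, f (a ⊔ b) + f (a ⊓ b) ≤ f a + f b

/-- `k` bounds the curvature of the set function `g` on the finite ground set `U`: the gain from
adding an element last is at least a fraction `1 - k` of its value alone. The ground set is
explicit, so that the ambient type may be infinite. -/
def HasCurvatureBound {V R : Type*} [DecidableEq V] [Ring R] [LE R]
    (g : Finset V → R) (U : Finset V) (k : R) : Prop :=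
  ∀ v ∈ U, (1 - k) * g {v} ≤ g U - g (U \ {v})

namespace IsSubmodular

section OrderedGroup

variable {R : Type*} [AddCommGroup R] [PartialOrder R] [IsOrderedAddMonoid R]

theorem sup_sub_le_sup_sub {α : Type*} [Lattice α] [IsModularLattice α] {f : α → R}
    (hf : IsSubmodular f) {a b c : α} (hab : a ≤ b) (hcb : c ⊓ b ≤ a) :
    f (b ⊔ c) - f b ≤ f (a ⊔ c) - f a := by
  have hsup : (a ⊔ c) ⊔ b = b ⊔ c := by
    rw [sup_right_comm, sup_eq_right.mpr hab]
  have hinf : (a ⊔ c) ⊓ b = a := by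
    rw [sup_inf_assoc_of_le c hab, sup_eq_left.mpr hcb]
  have h := hf (a ⊔ c) b
  rw [hsup, hinf] at h
  exact sub_le_sub_iff.mpr h

variable {V : Type*} [DecidableEq V] {g : Finset V → R} {A B S T U : Finset V} {v : V}

theorem insert_sub_le_insert_sub (hg : IsSubmodular g) (hAB : A ⊆ B) (hv : v ∉ B) :
    g (insert v B) - g B ≤ g (insert v A) - g A := by
  have hinter : {v} ∩ B ⊆ A := by simp only [Finset.singleton_inter_of_notMem hv, A.empty_subset]
  simpa only [Finset.sup_eq_union, Finset.union_singleton] using hg.sup_sub_le_sup_sub hAB hinter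

theorem sub_sdiff_singleton_le_insert_sub (hg : IsSubmodular g) (hAU : A ⊆ U) (hvU : v ∈ U)
    (hvA : v ∉ A) : g U - g (U \ {v}) ≤ g (insert v A) - g A := by
  have hAU' : A ⊆ U \ {v} :=
    Finset.subset_sdiff.mpr ⟨hAU, Finset.disjoint_singleton_right.mpr hvA⟩
  have hinsert : insert v (U \ {v}) = U := by
    rw [Finset.sdiff_singleton_eq_erase, Finset.insert_erase hvU]
  have hv : v ∉ U \ {v} := Finset.notMem_sdiff_of_mem_right (Finset.mem_singleton_self v)
  simpa only [hinsert] using hg.insert_sub_le_insert_sub hAU' hv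

theorem union_sub_le_sum_insert_sub (hg : IsSubmodular g) (hTA : T ⊆ A) (hAS : Disjoint A S) :
    g (A ∪ S) - g A ≤ ∑ v ∈ S, (g (insert v T) - g T) := by
  induction S using Finset.induction_on with
  | empty => simp
  | insert v S hvS ih =>
    obtain ⟨hvA, hAS⟩ := Finset.disjoint_insert_right.mp hAS
    have hv : v ∉ A ∪ S := Finset.notMem_union.mpr ⟨hvA, hvS⟩
    calc g (A ∪ insert v S) - g A
        = (g (insert v (A ∪ S)) - g (A ∪ S)) + (g (A ∪ S) - g A) := by
          rw [Finset.union_insert, sub_add_sub_cancel]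
      _ ≤ (g (insert v T) - g T) + ∑ w ∈ S, (g (insert w T) - g T) :=
          add_le_add
            (hg.insert_sub_le_insert_sub (hTA.trans Finset.subset_union_left) hv) (ih hAS)
      _ = ∑ w ∈ insert v S, (g (insert w T) - g T) := by rw [Finset.sum_insert hvS]

theorem sum_sub_sdiff_singleton_le_union_sub (hg : IsSubmodular g) (hU : A ∪ S ⊆ U)
    (hAS : Disjoint A S) : ∑ v ∈ S, (g U - g (U \ {v})) ≤ g (A ∪ S) - g A := by
  induction S using Finset.induction_on with
  | empty => simp
  | insert v S hvS ih =>
    obtain ⟨hvA, hAS⟩ := Finset.disjoint_insert_right.mp hAS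
    have hv : v ∉ A ∪ S := Finset.notMem_union.mpr ⟨hvA, hvS⟩
    rw [Finset.union_insert] at hU ⊢
    obtain ⟨hvU, hU⟩ := Finset.insert_subset_iff.mp hU
    calc ∑ w ∈ insert v S, (g U - g (U \ {w}))
        = (g U - g (U \ {v})) + ∑ w ∈ S, (g U - g (U \ {w})) := Finset.sum_insert hvS
      _ ≤ (g (insert v (A ∪ S)) - g (A ∪ S)) + (g (A ∪ S) - g A) :=
          add_le_add (hg.sub_sdiff_singleton_le_insert_sub hU hvU hv) (ih hU hAS)
      _ = g (insert v (A ∪ S)) - g A := sub_add_sub_cancel _ _ _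

theorem union_sub_le_sum_singleton (hg : IsSubmodular g) (hg0 : 0 ≤ g ∅) (hAS : Disjoint A S) :
    g (A ∪ S) - g A ≤ ∑ v ∈ S, g {v} :=
  (hg.union_sub_le_sum_insert_sub A.empty_subset hAS).trans
    (Finset.sum_le_sum fun v _ => sub_le_self (g {v}) hg0)

end OrderedGroup

theorem mul_sum_singleton_le_union_sub {V R : Type*} [DecidableEq V] [Ring R] [PartialOrder R]
    [IsOrderedAddMonoid R] {g : Finset V → R} {A S U : Finset V} {k : R} (hg : IsSubmodular g)
    (hk : HasCurvatureBound g U k) (hU : A ∪ S ⊆ U) (hAS : Disjoint A S) :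
    (1 - k) * ∑ v ∈ S, g {v} ≤ g (A ∪ S) - g A := by
  rw [Finset.mul_sum]
  exact (Finset.sum_le_sum fun v hv => hk v (hU (Finset.mem_union_right A hv))).trans
    (hg.sum_sub_sdiff_singleton_le_union_sub hU hAS)

end IsSubmodular

theorem sga_step_inequality_general {V R : Type*} [DecidableEq V] [Ring R] [PartialOrder R]
    [IsOrderedRing R] {g : Finset V → R} {U : Finset V} {k : R} (hg0 : 0 ≤ g ∅)
    (hg : IsSubmodular g) (hk1 : k ≤ 1) (hk : HasCurvatureBound g U k) {X Q : Finset V}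
    (hX : X ⊆ U) (hQ : Q ⊆ U) :
    (1 - k) * (g Q - g (X ∩ Q)) ≤ g (X ∪ Q) - g X := by
  have hdisj : Disjoint X (Q \ X) := Finset.disjoint_sdiff
  have hXQ : X ∪ Q \ X = X ∪ Q := Finset.union_sdiff_self_eq_union
  have hQX : (X ∩ Q) ∪ Q \ X = Q := by
    rw [Finset.union_comm, Finset.inter_comm, Finset.sdiff_union_inter]
  calc (1 - k) * (g Q - g (X ∩ Q))
      = (1 - k) * (g ((X ∩ Q) ∪ Q \ X) - g (X ∩ Q)) := by rw [hQX]
    _ ≤ (1 - k) * ∑ v ∈ Q \ X, g {v} :=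
        mul_le_mul_of_nonneg_left
          (hg.union_sub_le_sum_singleton hg0 (hdisj.mono_left Finset.inter_subset_left))
          (sub_nonneg.mpr hk1)
    _ ≤ g (X ∪ Q \ X) - g X :=
        hg.mul_sum_singleton_le_union_sub hk (hXQ ▸ Finset.union_subset hX hQ) hdisj
    _ = g (X ∪ Q) - g X := by rw [hXQ]

/-- With `Δ = X ∩ Q`,
`g(X ∪ (Q \ Δ)) - g(X) ≥ (1 - k_f)·(g(Q) - g(Δ))`. -/
theorem sga_step_inequality
    {V : Type*} [Fintype V] [DecidableEq V]
    (g : Finset V → ℝ)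
    (hg0 : g ∅ = 0)
    (hgmono : ∀ A B : Finset V, A ⊆ B → g A ≤ g B)
    (hgsub : ∀ A B : Finset V, g A + g B ≥ g (A ∪ B) + g (A ∩ B))
    (kf : ℝ) (hkf0 : 0 ≤ kf) (hkf1 : kf ≤ 1)
    (hcurv : ∀ v : V, g Finset.univ - g (Finset.univ \ {v}) ≥ (1 - kf) * g {v}) :
    ∀ X Q : Finset V,
      g (X ∪ (Q \ (X ∩ Q))) - g X ≥ (1 - kf) * (g Q - g (X ∩ Q)) := by
  intro X Q
  rw [Finset.sdiff_inter_self_right, Finset.union_sdiff_self_eq_union]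
  exact sga_step_inequality_general hg0.ge hgsub hkf1 (fun v _ => hcurv v)
    X.subset_univ Q.subset_univ
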